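/- For any a ∈ ℕ with binary expansion a = Σ_{k=0}^{n-1} a_k 2^k and b_j = 2a_j - 1, the variance of μ_a equals n/2 + 1 - 2^{-n} - ½ Σ_{i=1}^{n-1} Σ_{k=0}^{n-1-i} b_{k+i} b_k / 2^i + Σ_{k=0}^{n-1} (b_k + b_{n-1-k})/2^{k+1}. -/

import Mathlib

/-!
Write `v a` for the variance of `μ_a`. Splitting `n` by parity gives `μ_{2a} = μ_a` and
`μ_{2a+1}(d) = (μ_a(d - 1) + μ_{a+1}(d + 1)) / 2`, hence `v (2a) = v a` and
`v (2a+1) = (v a + v (a+1)) / 2 + 1`. Appending a lowest binary digit therefore acts affinely on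
the pair `(v a, v (a+1))`, which is `(0, 2)` for the empty expansion. If `V` is the claimed value
of `v a`, then `v (a+1) = V + 2^{1-n} - 2W` with `W = ∑ k < n, b_k / 2^{k+1}`, and this pair obeys
the same recursion as `b_0` is put in front of the signed digits.
-/

open Filter

/-- Binary sum-of-digits function. -/
def s2 (n : ℕ) : ℕ := (Nat.digits 2 n).sum

/-- `hasDensity a d x` means `{n : s₂(n+a) - s₂(n) = d}` has asymptotic density `x`. -/
def hasDensity (a : ℕ) (d : ℤ) (x : ℝ) : Prop :=
  Tendsto (fun N : ℕ =>
      (((Finset.range N).filter (fun n => (s2 (n + a) : ℤ) - s2 n = d)).card : ℝ) / N)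
    atTop (nhds x)

/-- `HasNatDensity p x` means that the set of natural numbers satisfying `p` has natural
(asymptotic) density `x`. -/
def HasNatDensity (p : ℕ → Prop) [DecidablePred p] (x : ℝ) : Prop :=
  Tendsto (fun N : ℕ => (Nat.count p N : ℝ) / N) atTop (nhds x)

section NaturalDensity

variable {p q : ℕ → Prop} [DecidablePred p] [DecidablePred q] {x : ℝ}

theorem HasNatDensity.congr (hp : HasNatDensity p x) (h : ∀ n, q n ↔ p n) : HasNatDensity q x := by
  obtain rfl : q = p := funext fun n => propext (h n)
  convert! hp

theorem hasNatDensity_one_of_forall (h : ∀ n, p n) : HasNatDensity p 1 := by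
  refine tendsto_const_nhds.congr' ?_
  filter_upwards [eventually_ne_atTop 0] with N hN
  rw [Nat.count_of_forall fun n _ => h n, div_self (Nat.cast_ne_zero.2 hN)]

theorem hasNatDensity_zero_of_forall_not (h : ∀ n, ¬p n) : HasNatDensity p 0 := by
  refine tendsto_const_nhds.congr fun N => ?_
  rw [Nat.count_of_forall_not fun n _ => h n, Nat.cast_zero, zero_div]

-- `(N + (m - 1 - r)) / m` is the number of `k` with `m * k + r < N`.
theorem count_residue_succ {m r : ℕ} (hr : r < m) (N : ℕ) :
    Nat.count (fun k => p (m * k + r)) ((N + 1 + (m - 1 - r)) / m) =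
      Nat.count (fun k => p (m * k + r)) ((N + (m - 1 - r)) / m) +
        if r = N % m then (if p N then 1 else 0) else 0 := by
  have hdvd : m ∣ N + (m - 1 - r) + 1 ↔ r = N % m := by
    rw [show N + (m - 1 - r) + 1 = N + m - r by omega, ← Int.natCast_dvd_natCast,
      Nat.cast_sub (by omega), Nat.cast_add, add_sub_right_comm, dvd_add_self_right,
      ← Nat.modEq_iff_dvd, Nat.ModEq, Nat.mod_eq_of_lt hr]
  rw [add_right_comm, Nat.succ_div, if_congr hdvd rfl rfl]
  rcases eq_or_ne r (N % m) with hrN | hrN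
  · have hdm := Nat.div_add_mod' N m
    have hquot : (N + (m - 1 - r)) / m = N / m :=
      Nat.div_eq_of_lt_le (by omega) (by rw [add_one_mul]; omega)
    rw [if_pos hrN, if_pos hrN, Nat.count_succ, hquot, hrN, Nat.div_add_mod]
  · rw [if_neg hrN, if_neg hrN, add_zero, add_zero]

theorem count_eq_sum_count_residues {m : ℕ} (hm : m ≠ 0) (N : ℕ) :
    Nat.count p N =
      ∑ r ∈ Finset.range m, Nat.count (fun k => p (m * k + r)) ((N + (m - 1 - r)) / m) := by
  induction N with
  | zero =>
    refine (Finset.sum_eq_zero fun r _ => ?_).symm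
    rw [Nat.div_eq_of_lt (by omega), Nat.count_zero]
  | succ N ih =>
    rw [Nat.count_succ, ih,
      Finset.sum_congr rfl fun r hr => count_residue_succ (Finset.mem_range.1 hr) N,
      Finset.sum_add_distrib, Finset.sum_ite_eq',
      if_pos (Finset.mem_range.2 (Nat.mod_lt N hm.pos))]

theorem tendsto_add_div_div_atTop (c m : ℕ) :
    Tendsto (fun N : ℕ => (((N + c) / m : ℕ) : ℝ) / N) atTop (nhds (1 / m)) := by
  have hfloor : Tendsto (fun N : ℕ => (((N + c) / m : ℕ) : ℝ) / (N + c : ℕ)) atTop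
      (nhds (1 / m)) := by
    simpa only [Function.comp_def, one_div_mul_eq_div, Nat.floor_div_eq_div] using
      (tendsto_nat_floor_mul_div_atTop (R := ℝ) (one_div_nonneg.2 m.cast_nonneg)).comp
        (tendsto_natCast_atTop_atTop.comp (tendsto_add_atTop_nat c))
  have hratio : Tendsto (fun N : ℕ => ((N + c : ℕ) : ℝ) / N) atTop (nhds 1) := by
    simpa [add_comm] using tendsto_add_mul_div_add_mul_atTop_nhds (c : ℝ) 0 1 one_ne_zero
  rw [← mul_one (1 / (m : ℝ))]
  refine (hfloor.mul hratio).congr' ?_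
  filter_upwards [eventually_ne_atTop 0] with N hN
  exact div_mul_div_cancel₀ (Nat.cast_ne_zero.2 (by omega))

theorem tendsto_comp_add_div_div {f : ℕ → ℝ} (hf : Tendsto (fun N : ℕ => f N / N) atTop (nhds x))
    (c : ℕ) {m : ℕ} (hm : m ≠ 0) :
    Tendsto (fun N : ℕ => f ((N + c) / m) / N) atTop (nhds (x / m)) := by
  have hquot : Tendsto (fun N : ℕ => (N + c) / m) atTop atTop :=
    (Nat.tendsto_div_const_atTop hm).comp (tendsto_add_atTop_nat c)
  rw [div_eq_mul_one_div]
  refine ((hf.comp hquot).mul (tendsto_add_div_div_atTop c m)).congr' ?_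
  filter_upwards [hquot.eventually_ne_atTop 0] with N hN
  exact div_mul_div_cancel₀ (Nat.cast_ne_zero.2 hN)

theorem hasNatDensity_of_residues {m : ℕ} (hm : m ≠ 0) {x : ℕ → ℝ}
    (h : ∀ r < m, HasNatDensity (fun k => p (m * k + r)) (x r)) :
    HasNatDensity p ((∑ r ∈ Finset.range m, x r) / m) := by
  rw [Finset.sum_div]
  refine (tendsto_finsetSum _ fun r hr =>
    tendsto_comp_add_div_div (h r (Finset.mem_range.1 hr)) (m - 1 - r) hm).congr fun N => ?_
  rw [count_eq_sum_count_residues hm, Nat.cast_sum, Finset.sum_div]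

theorem hasNatDensity_of_even_of_odd {y : ℝ} (hx : HasNatDensity (fun k => p (2 * k)) x)
    (hy : HasNatDensity (fun k => p (2 * k + 1)) y) : HasNatDensity p ((x + y) / 2) := by
  have h := hasNatDensity_of_residues (p := p) two_ne_zero (x := fun r => if r = 0 then x else y)
    fun r hr => by interval_cases r <;> simpa
  simpa [Finset.sum_range_succ] using h

end NaturalDensity

theorem s2_two_mul (m : ℕ) : s2 (2 * m) = s2 m := by
  rcases m.eq_zero_or_pos with rfl | hm
  · rfl
  · rw [s2, Nat.digits_base_mul one_lt_two hm, List.sum_cons, zero_add, s2]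

theorem s2_two_mul_add_one (m : ℕ) : s2 (2 * m + 1) = s2 m + 1 := by
  rw [s2, add_comm, Nat.digits_add 2 one_lt_two 1 m one_lt_two (.inl one_ne_zero), List.sum_cons,
    add_comm, s2]

theorem s2_add_one_le (n : ℕ) : s2 (n + 1) ≤ s2 n + 1 := by
  induction n using Nat.strong_induction_on with
  | _ n ih =>
    rcases n.even_or_odd' with ⟨m, rfl | rfl⟩
    · rw [s2_two_mul_add_one, s2_two_mul]
    · have hm := ih m (by omega)
      rw [show 2 * m + 1 + 1 = 2 * (m + 1) by ring, s2_two_mul, s2_two_mul_add_one]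
      omega

section DigitDensity

variable {a : ℕ} {d : ℤ} {x y : ℝ}

theorem hasDensity_iff_hasNatDensity :
    hasDensity a d x ↔ HasNatDensity (fun n => (s2 (n + a) : ℤ) - s2 n = d) x := by
  simp only [hasDensity, HasNatDensity, Nat.count_eq_card_filter_range]

theorem hasDensity.unique (hx : hasDensity a d x) (hy : hasDensity a d y) : x = y :=
  tendsto_nhds_unique hx hy

theorem hasDensity.two_mul (h : hasDensity a d x) : hasDensity (2 * a) d x := by
  rw [hasDensity_iff_hasNatDensity] at h ⊢
  rw [← add_self_div_two x]
  refine hasNatDensity_of_even_of_odd (h.congr fun m => ?_) (h.congr fun m => ?_)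
  · rw [← mul_add, s2_two_mul, s2_two_mul]
  · rw [show 2 * m + 1 + 2 * a = 2 * (m + a) + 1 by ring, s2_two_mul_add_one, s2_two_mul_add_one]
    omega

theorem hasDensity.two_mul_add_one (hx : hasDensity a (d - 1) x)
    (hy : hasDensity (a + 1) (d + 1) y) : hasDensity (2 * a + 1) d ((x + y) / 2) := by
  rw [hasDensity_iff_hasNatDensity] at hx hy ⊢
  refine hasNatDensity_of_even_of_odd (hx.congr fun m => ?_) (hy.congr fun m => ?_)
  · rw [show 2 * m + (2 * a + 1) = 2 * (m + a) + 1 by ring, s2_two_mul, s2_two_mul_add_one]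
    omega
  · rw [show 2 * m + 1 + (2 * a + 1) = 2 * (m + (a + 1)) by ring, s2_two_mul_add_one, s2_two_mul]
    omega

theorem hasDensity_zero (d : ℤ) : hasDensity 0 d (Pi.single (M := fun _ => ℝ) 0 1 d) := by
  rw [hasDensity_iff_hasNatDensity]
  rcases eq_or_ne d 0 with rfl | hd
  · simpa using hasNatDensity_one_of_forall fun n => sub_self (s2 n : ℤ)
  · rw [Pi.single_eq_of_ne hd]
    exact hasNatDensity_zero_of_forall_not fun n hn => hd (by simpa using hn.symm)

theorem hasDensity_one_of_one_lt (hd : 1 < d) : hasDensity 1 d 0 := by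
  rw [hasDensity_iff_hasNatDensity]
  refine hasNatDensity_zero_of_forall_not fun n hn => ?_
  have := s2_add_one_le n
  omega

theorem hasDensity_one_of_le_one (hd : d ≤ 1) : hasDensity 1 d (2 ^ (d - 2)) := by
  induction d, hd using Int.leInductionDown with
  | base =>
    have h := (hasDensity_zero (1 - 1)).two_mul_add_one (hasDensity_one_of_one_lt one_lt_two)
    convert h using 1
    norm_num
  | pred d hd ih =>
    have h := (hasDensity_zero (d - 1 - 1)).two_mul_add_one (by simpa using ih)
    rw [Pi.single_eq_of_ne (by omega), zero_add] at h
    rwa [show d - 1 - 2 = d - 2 - 1 by ring, zpow_sub_one₀ two_ne_zero, ← div_eq_mul_inv]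

end DigitDensity

theorem hasSum_int_iff_hasSum_sub_nat {M : Type*} [AddCommMonoid M] [TopologicalSpace M]
    {f : ℤ → M} {s : M} {c : ℤ} (hf : ∀ d, c < d → f d = 0) :
    HasSum f s ↔ HasSum (fun k : ℕ => f (c - k)) s := by
  have hinj : Function.Injective fun k : ℕ => c - k := fun j k h => by simpa using h
  refine (hinj.hasSum_iff fun d hd => hf d ?_).symm
  by_contra! hdc
  exact hd ⟨(c - d).toNat, by grind⟩

theorem hasSum_sq_mul_geometric_of_norm_lt_one {K : Type*} [NormedField K] {r : K}
    (hr : ‖r‖ < 1) :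
    HasSum (fun k : ℕ => (k : K) ^ 2 * r ^ k) (r * (1 + r) / (1 - r) ^ 3) := by
  have sq_eq (k : ℕ) : (k : K) ^ 2 = 2 * (k + 2).choose 2 - 3 * k - 2 := by
    have hchoose : ((k : K) + 2) * (k + 1) = (k + 2).choose 2 * 2 := by
      simpa [add_assoc, one_add_one_eq_two] using
        congrArg (Nat.cast : ℕ → K) (Nat.add_one_mul_choose_eq (k + 1) 1)
    linear_combination hchoose
  have hr1 : 1 - r ≠ 0 := sub_ne_zero.2 fun h => by simp [← h] at hr
  convert! (((hasSum_choose_mul_geometric_of_norm_lt_one 2 hr).mul_left 2).sub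
    ((hasSum_coe_mul_geometric_of_norm_lt_one hr).mul_left 3)).sub
      ((hasSum_geometric_of_norm_lt_one hr).mul_left 2) using 1
  · funext k
    rw [sq_eq]
    ring
  · field_simp
    ring

/-- `IsCenteredWithVariance ν v` means that the weights `ν` on `ℤ` have total mass one, mean zero
and second moment `v`, all three series being summable. Nonnegativity of `ν` is not imposed. -/
structure IsCenteredWithVariance (ν : ℤ → ℝ) (v : ℝ) : Prop where
  hasSum_one : HasSum ν 1
  hasSum_mean : HasSum (fun d : ℤ => (d : ℝ) * ν d) 0
  hasSum_sq : HasSum (fun d : ℤ => (d : ℝ) ^ 2 * ν d) v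

theorem isCenteredWithVariance_single : IsCenteredWithVariance (Pi.single 0 1) 0 where
  hasSum_one := hasSum_pi_single 0 1
  hasSum_mean := by
    convert! hasSum_zero using 2 with d
    rcases eq_or_ne d 0 with rfl | hd <;> simp [*]
  hasSum_sq := by
    convert! hasSum_zero using 2 with d
    rcases eq_or_ne d 0 with rfl | hd <;> simp [*]

theorem IsCenteredWithVariance.average_translate {ν ρ : ℤ → ℝ} {v w : ℝ}
    (hν : IsCenteredWithVariance ν v) (hρ : IsCenteredWithVariance ρ w) (c : ℤ) :
    IsCenteredWithVariance (fun d => (ν (d - c) + ρ (d + c)) / 2) ((v + w) / 2 + c ^ 2) := by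
  have average {f g : ℤ → ℝ} {s t : ℝ} (hf : HasSum f s) (hg : HasSum g t) :
      HasSum (fun d => (f (d - c) + g (d + c)) / 2) ((s + t) / 2) :=
    (((Equiv.subRight c).hasSum_iff.2 hf).add ((Equiv.addRight c).hasSum_iff.2 hg)).div_const 2
  refine ⟨?_, ?_, ?_⟩
  · simpa using average hν.hasSum_one hρ.hasSum_one
  · convert average (hν.hasSum_mean.add (hν.hasSum_one.mul_left (c : ℝ)))
      (hρ.hasSum_mean.sub (hρ.hasSum_one.mul_left (c : ℝ))) using 1
    · funext d; push_cast; ring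
    · ring
  · convert average
      ((hν.hasSum_sq.add (hν.hasSum_mean.mul_left (2 * c : ℝ))).add
        (hν.hasSum_one.mul_left (c ^ 2 : ℝ)))
      ((hρ.hasSum_sq.sub (hρ.hasSum_mean.mul_left (2 * c : ℝ))).add
        (hρ.hasSum_one.mul_left (c ^ 2 : ℝ))) using 1
    · funext d; push_cast; ring
    · ring

theorem isCenteredWithVariance_geometric :
    IsCenteredWithVariance (fun d => if d ≤ 1 then 2 ^ (d - 2) else 0) 2 := by
  have hweight (k : ℕ) :
      (if 1 - (k : ℤ) ≤ 1 then (2 : ℝ) ^ (1 - (k : ℤ) - 2) else 0) = (1 / 2) ^ k / 2 := by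
    rw [if_pos (by omega), show 1 - (k : ℤ) - 2 = -k - 1 by ring, zpow_sub_one₀ two_ne_zero,
      zpow_neg, zpow_natCast, one_div, inv_pow, div_eq_mul_inv]
  have hr : ‖(1 / 2 : ℝ)‖ < 1 := by norm_num
  have hmass := hasSum_geometric_two
  have hmean := hasSum_coe_mul_geometric_of_norm_lt_one hr
  have hsq := hasSum_sq_mul_geometric_of_norm_lt_one hr
  refine ⟨?_, ?_, ?_⟩ <;> rw [hasSum_int_iff_hasSum_sub_nat (c := 1) (by grind)]
  · convert! hmass.div_const 2 using 1
    · exact funext hweight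
    · norm_num
  · convert! (hmass.sub hmean).div_const 2 using 1
    · funext k; rw [hweight]; push_cast; ring
    · norm_num
  · convert! ((hmass.sub (hmean.mul_left 2)).add hsq).div_const 2 using 1
    · funext k; rw [hweight]; push_cast; ring
    · norm_num

/-- `HasVariance a v` means that the densities of the sets `{n : s₂(n+a) - s₂(n) = d}`, `d ∈ ℤ`,
exist and form weights on `ℤ` of total mass one, mean zero and variance `v`. -/
def HasVariance (a : ℕ) (v : ℝ) : Prop :=
  ∃ ν : ℤ → ℝ, (∀ d, hasDensity a d (ν d)) ∧ IsCenteredWithVariance ν v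

theorem hasVariance_zero : HasVariance 0 0 :=
  ⟨Pi.single 0 1, hasDensity_zero, isCenteredWithVariance_single⟩

theorem hasVariance_one : HasVariance 1 2 := by
  refine ⟨_, fun d => ?_, isCenteredWithVariance_geometric⟩
  split_ifs with hd
  · exact hasDensity_one_of_le_one hd
  · exact hasDensity_one_of_one_lt (not_le.1 hd)

theorem HasVariance.two_mul {a : ℕ} {v : ℝ} (h : HasVariance a v) : HasVariance (2 * a) v := by
  obtain ⟨ν, hν, hc⟩ := h
  exact ⟨ν, fun d => (hν d).two_mul, hc⟩

theorem HasVariance.two_mul_add_one {a : ℕ} {v w : ℝ} (hv : HasVariance a v)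
    (hw : HasVariance (a + 1) w) : HasVariance (2 * a + 1) ((v + w) / 2 + 1) := by
  obtain ⟨ν, hν, hνc⟩ := hv
  obtain ⟨ρ, hρ, hρc⟩ := hw
  exact ⟨_, fun d => (hν _).two_mul_add_one (hρ _), by simpa using hνc.average_translate hρc 1⟩

section Formula

variable {K : Type*} [Field K]

/-- The sum `b₀/2 + b₁/4 + ⋯ + bₙ₋₁/2ⁿ` of signed digits, which enters the variance of both `μ_a`
and `μ_{a+1}`. -/
def weightedSum (n : ℕ) (b : ℕ → K) : K := ∑ k ∈ Finset.range n, b k / 2 ^ (k + 1)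

/-- The autocorrelations of the signed digits `b₀, …, bₙ₋₁` at the lags `i ≥ 1`, summed with
weights `2⁻ⁱ`; this is the quadratic part of the variance. -/
def weightedAutocorrelation (n : ℕ) (b : ℕ → K) : K :=
  ∑ i ∈ Finset.Icc 1 (n - 1), ∑ k ∈ Finset.range (n - i), b (k + i) * b k / 2 ^ i

/-- The closed form of the variance in terms of the signed digits `bₖ = 2aₖ - 1`. -/
def varianceExpr (n : ℕ) (b : ℕ → K) : K :=
  (n : K) / 2 + 1 - 1 / 2 ^ n - (1 / 2) * weightedAutocorrelation n b
    + weightedSum n fun k => b k + b (n - 1 - k)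

theorem weightedSum_add (n : ℕ) (b c : ℕ → K) :
    (weightedSum n fun k => b k + c k) = weightedSum n b + weightedSum n c := by
  simp only [weightedSum, add_div, Finset.sum_add_distrib]

theorem weightedSum_succ (n : ℕ) (b : ℕ → K) :
    weightedSum (n + 1) b = (b 0 + weightedSum n fun k => b (k + 1)) / 2 := by
  simp only [weightedSum, Finset.sum_range_succ', pow_succ _ (_ + 1), ← div_div, zero_add, pow_one,
    ← Finset.sum_div, ← add_div, add_comm (b 0)]

theorem weightedSum_reverse_succ (n : ℕ) (b : ℕ → K) :
    (weightedSum (n + 1) fun k => b (n + 1 - 1 - k)) =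
      (weightedSum n fun k => b (n - 1 - k + 1)) + b 0 / 2 ^ (n + 1) := by
  rw [weightedSum, Finset.sum_range_succ, Nat.add_sub_cancel, Nat.sub_self]
  refine congrArg (· + _) (Finset.sum_congr rfl fun k hk => ?_)
  rw [show n - k = n - 1 - k + 1 by grind]

theorem weightedAutocorrelation_succ (n : ℕ) (b : ℕ → K) :
    weightedAutocorrelation (n + 1) b =
      weightedAutocorrelation n (fun k => b (k + 1)) + b 0 * weightedSum n fun k => b (k + 1) := by
  have split_first_term : ∀ i ∈ Finset.Icc 1 n,
      ∑ k ∈ Finset.range (n + 1 - i), b (k + i) * b k / 2 ^ i =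
        (∑ k ∈ Finset.range (n - i), b (k + i + 1) * b (k + 1) / 2 ^ i)
          + b 0 * (b i / 2 ^ i) := by
    intro i hi
    rw [Nat.succ_sub (Finset.mem_Icc.1 hi).2, Finset.sum_range_succ', zero_add, mul_comm (b i),
      mul_div_assoc]
    simp only [add_right_comm]
  have drop_top_lag :
      ∑ i ∈ Finset.Icc 1 n, ∑ k ∈ Finset.range (n - i), b (k + i + 1) * b (k + 1) / 2 ^ i =
        weightedAutocorrelation n fun k => b (k + 1) := by
    refine (Finset.sum_subset (Finset.Icc_subset_Icc_right (n.sub_le 1)) fun i hi hi' => ?_).symm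
    rw [show n - i = 0 by rw [Finset.mem_Icc] at hi hi'; omega, Finset.sum_range_zero]
  have shift_lags : ∑ i ∈ Finset.Icc 1 n, b i / 2 ^ i = weightedSum n fun k => b (k + 1) := by
    rw [weightedSum, Finset.range_eq_Ico, Finset.sum_Ico_add' (fun k => b k / 2 ^ k) 0 n 1]
    rfl
  rw [weightedAutocorrelation, Nat.add_sub_cancel, Finset.sum_congr rfl split_first_term,
    Finset.sum_add_distrib, ← Finset.mul_sum, drop_top_lag, shift_lags]

theorem varianceExpr_succ [NeZero (2 : K)] (n : ℕ) (b : ℕ → K) :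
    varianceExpr (n + 1) b = varianceExpr n (fun k => b (k + 1)) +
      (1 + b 0) / 2 * (1 + 1 / 2 ^ n - weightedSum n fun k => b (k + 1)) := by
  simp only [varianceExpr, weightedSum_add, weightedAutocorrelation_succ, weightedSum_succ n b,
    weightedSum_reverse_succ]
  push_cast
  field_simp
  ring

end Formula

theorem sum_range_succ_mul_pow {R : Type*} [CommSemiring R] (f : ℕ → R) (x : R) (n : ℕ) :
    ∑ k ∈ Finset.range (n + 1), f k * x ^ k =
      x * ∑ k ∈ Finset.range n, f (k + 1) * x ^ k + f 0 := by
  rw [Finset.sum_range_succ', pow_zero, mul_one, Finset.mul_sum]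
  exact congrArg (· + _) (Finset.sum_congr rfl fun k _ => by ring)

theorem hasVariance_sum_digits_and_add_one {n : ℕ} {dig : ℕ → ℕ} (hdig : ∀ k < n, dig k ≤ 1)
    {b : ℕ → ℝ} (hb : ∀ k < n, b k = 2 * (dig k : ℝ) - 1) :
    HasVariance (∑ k ∈ Finset.range n, dig k * 2 ^ k) (varianceExpr n b) ∧
      HasVariance (∑ k ∈ Finset.range n, dig k * 2 ^ k + 1)
        (varianceExpr n b + 2 / 2 ^ n - 2 * weightedSum n b) := by
  induction n generalizing dig b with
  | zero =>
    simpa [varianceExpr, weightedAutocorrelation, weightedSum] using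
      And.intro hasVariance_zero hasVariance_one
  | succ n ih =>
    obtain ⟨hv, hw⟩ := ih (dig := fun k => dig (k + 1)) (b := fun k => b (k + 1))
      (fun k hk => hdig (k + 1) (by omega)) fun k hk => hb (k + 1) (by omega)
    have hodd := hv.two_mul_add_one hw
    rw [sum_range_succ_mul_pow, varianceExpr_succ, weightedSum_succ]
    rcases Nat.le_one_iff_eq_zero_or_eq_one.1 (hdig 0 n.succ_pos) with h0 | h0
    · have hb0 : b 0 = -1 := by rw [hb 0 n.succ_pos, h0]; norm_num
      rw [h0, hb0]
      constructor
      · convert hv.two_mul using 1 <;> ring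
      · convert hodd using 1
        ring
    · have hb0 : b 0 = 1 := by rw [hb 0 n.succ_pos, h0]; norm_num
      rw [h0, hb0]
      constructor
      · convert hodd using 1
        ring
      · convert hw.two_mul using 1 <;> ring

theorem variance_formula (a n : ℕ) (dig : ℕ → ℕ) (hdig : ∀ j, dig j ≤ 1)
    (ha : a = ∑ k ∈ Finset.range n, dig k * 2 ^ k)
    (b : ℕ → ℝ) (hb : ∀ j, b j = 2 * (dig j : ℝ) - 1)
    (μ : ℤ → ℝ) (hμ : ∀ d, hasDensity a d (μ d))
    (hsum : Summable fun d : ℤ => (d : ℝ) ^ 2 * μ d) :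
    ∑' d : ℤ, (d : ℝ) ^ 2 * μ d =
      (n : ℝ) / 2 + 1 - 1 / 2 ^ n
        - (1 / 2) * ∑ i ∈ Finset.Icc 1 (n - 1), ∑ k ∈ Finset.range (n - i),
            b (k + i) * b k / 2 ^ i
        + ∑ k ∈ Finset.range n, (b k + b (n - 1 - k)) / 2 ^ (k + 1) := by
  obtain ⟨ν, hν, hc⟩ :=
    (hasVariance_sum_digits_and_add_one (n := n) (fun k _ => hdig k) fun k _ => hb k).1
  obtain rfl : μ = ν := funext fun d => (hμ d).unique (ha ▸ hν d)
  exact hc.hasSum_sq.tsum_eq
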